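/- arXiv:1510.05835 — 4 statements merged into one kernel-verified Lean document; each statement's English description precedes it below -/
import Mathlib

section
/- Let ζ denote the Riemann zeta function. For every s ∈ ℂ with Re(s) > 1, the series ∑_{k≥0} (s−1)_k (ζ(s+k) − 1) converges absolutely and its sum equals 1. -/
/-!
For `n ≥ 2` the negative binomial series of `(1 - 1/n)^{-(s-1)}`, multiplied by `n^{1-s}`, reads
`∑_{k≥0} (s-1)_k n^{-(s+k)} = (n-1)^{1-s} - n^{1-s}` (`hasSum_row`). Summing over `n ≥ 2` telescopes
to `1`, because `n^{1-s} → 0` for `Re s > 1`, while summing over `n` first produces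
`(s-1)_k (ζ(s+k) - 1)` (`hasSum_col`). The interchange and the absolute convergence both follow
from the bound `|n^{-(s+k)}| ≤ n^{-Re s} 2^{-k}`, which dominates the double series by a product of
two convergent series (`summable_norm_double`). The index `n` is shifted by `2` throughout.
-/

open Complex

/-- `e(a) = e^{2πia}`. -/
noncomputable def eR (a : ℝ) : ℂ := Complex.exp (2 * Real.pi * Complex.I * a)

/-- For a real `b > 0` and `z ∈ ℂ`, `b^z := exp (z log b)` (real logarithm). -/
noncomputable def rpowC (b : ℝ) (z : ℂ) : ℂ := Complex.exp (z * Real.log b)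

/-- Strictly decreasing tuples of positive integers `n_1 > n_2 > ⋯ > n_r > 0`. -/
def DTuple (r : ℕ) : Type := {n : Fin r → ℕ // StrictAnti n ∧ ∀ i, 0 < n i}

/-- The term `e(λ_1 n_1)⋯e(λ_r n_r) / ((n_1+α_1)^{s_1}⋯(n_r+α_r)^{s_r})`. -/
noncomputable def lerchTerm {r : ℕ} (lam al : Fin r → ℝ) (s : Fin r → ℂ)
    (n : Fin r → ℕ) : ℂ :=
  (∏ i, eR (lam i * n i)) / ∏ i, rpowC ((n i : ℝ) + al i) (s i)

/-- The multiple Lerch zeta function (as a sum over strictly decreasing tuples). -/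
noncomputable def multipleLerch {r : ℕ} (lam al : Fin r → ℝ) (s : Fin r → ℂ) : ℂ :=
  ∑' n : DTuple r, lerchTerm lam al s n.1

/-- The term `(n_1+α_1)^{-s_1}⋯(n_r+α_r)^{-s_r}`. -/
noncomputable def hzTerm {r : ℕ} (al : Fin r → ℝ) (s : Fin r → ℂ) (n : Fin r → ℕ) : ℂ :=
  ∏ i, rpowC ((n i : ℝ) + al i) (-(s i))

/-- The multiple Hurwitz zeta function (as a sum over strictly decreasing tuples). -/
noncomputable def multipleHurwitz {r : ℕ} (al : Fin r → ℝ) (s : Fin r → ℂ) : ℂ :=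
  ∑' n : DTuple r, hzTerm al s n.1

/-- `U_r(m) = {s ∈ ℂ^r : Re(s_1+⋯+s_i) > i − m for 1 ≤ i ≤ r}` (0-based indexing). -/
def Ur (r : ℕ) (m : ℤ) : Set (Fin r → ℂ) :=
  {s | ∀ i : Fin r, ((i : ℕ) + 1 - m : ℝ) < (∑ j ∈ Finset.Iic i, s j).re}

/-- `(s)_k = s(s+1)⋯(s+k)/(k+1)!` for `k ≥ 0` and `(s)_k = 1` for `k < 0`. -/
noncomputable def pochZ (s : ℂ) (k : ℤ) : ℂ :=
  if 0 ≤ k then (∏ j ∈ Finset.range (k.toNat + 1), (s + j)) / (Nat.factorial (k.toNat + 1))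
  else 1

/-- The hyperplane `H_{i,k} : s_1 + ⋯ + s_i = i − k` (0-based: `i` here is paper's `i−1`). -/
def Hplane (r : ℕ) (i : Fin r) (k : ℕ) : Set (Fin r → ℂ) :=
  {s | ∑ j ∈ Finset.Iic i, s j = ((i : ℕ) + 1 : ℂ) - k}

/-- The union of the hyperplanes `H_{i,k}` for `(i,k)` satisfying the predicate `P`. -/
def polarSet {r : ℕ} (P : Fin r → ℕ → Prop) : Set (Fin r → ℂ) :=
  {s | ∃ i k, P i k ∧ s ∈ Hplane r i k}

/-- `F` has (at most) simple poles along the hyperplanes `H_{i,k}`, `(i,k) ∈ P`: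
around every point `p`, multiplying `F` by the (finitely many) linear factors
`s_1+⋯+s_i−i+k` of the members of `P` passing through `p` yields a function
that extends analytically to a neighbourhood of `p`. -/
def SimplePolesAlong {r : ℕ} (P : Fin r → ℕ → Prop) (F : (Fin r → ℂ) → ℂ) : Prop :=
  ∀ p : Fin r → ℂ, ∀ T : Finset (Fin r × ℕ),
    (∀ i k, (i, k) ∈ T ↔ (P i k ∧ p ∈ Hplane r i k)) →
    ∃ (V : Set (Fin r → ℂ)) (G : (Fin r → ℂ) → ℂ),
      IsOpen V ∧ p ∈ V ∧ AnalyticOnNhd ℂ G V ∧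
      ∀ s ∈ V, s ∉ polarSet P →
        G s = (∏ q ∈ T, ((∑ j ∈ Finset.Iic q.1, s j) - ((q.1 : ℕ) + 1 : ℂ) + (q.2 : ℂ))) * F s

lemma pochZ_eq_choose (a : ℂ) (k : ℕ) :
    pochZ a k = Ring.choose (a + (k + 1 : ℕ) - 1) (k + 1) := by
  have hprod : ∀ m : ℕ, (ascPochhammer ℂ m).eval a = ∏ j ∈ Finset.range m, (a + j) := by
    intro m
    induction m with
    | zero => simp
    | succ m ih => rw [ascPochhammer_succ_eval, ih, Finset.prod_range_succ]
  have h := Ring.factorial_nsmul_multichoose_eq_ascPochhammer a (k + 1)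
  rw [Polynomial.ascPochhammer_smeval_eq_eval, hprod, Ring.multichoose_eq, nsmul_eq_mul] at h
  have h0 : ((k + 1).factorial : ℂ) ≠ 0 := by exact_mod_cast Nat.factorial_ne_zero _
  simp only [pochZ, Int.natCast_nonneg, if_true, Int.toNat_natCast]
  rw [← h, mul_div_cancel_left₀ _ h0]

/-- The negative binomial series without its constant term. -/
lemma hasSum_pochZ (a x : ℂ) (hx : ‖x‖ < 1) :
    HasSum (fun k : ℕ => pochZ a k * x ^ (k + 1)) (1 / (1 - x) ^ a - 1) := by
  have hmem : x ∈ Metric.eball (0 : ℂ) 1 := by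
    rw [← ENNReal.ofReal_one, Metric.eball_ofReal]
    simpa using hx
  have h := (Complex.one_div_one_sub_cpow_hasFPowerSeriesOnBall_zero a).hasSum hmem
  rw [← hasSum_nat_add_iff' 1] at h
  simpa [pochZ_eq_choose, FormalMultilinearSeries.ofScalars, mul_comm, pow_succ] using h

lemma summable_norm_pochZ (a : ℂ) :
    Summable (fun k : ℕ => ‖pochZ a k‖ * (1 / 2 : ℝ) ^ k) := by
  have h := (hasSum_pochZ a (1 / 2) (by norm_num)).summable.norm.mul_left 2
  refine h.congr fun k => ?_
  rw [norm_mul, norm_pow, pow_succ]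
  norm_num
  ring

lemma one_div_cpow_add_nat (s : ℂ) (n k : ℕ) :
    1 / ((n + 2 : ℕ) : ℂ) ^ (s + k)
      = ((n + 2 : ℕ) : ℂ) ^ (1 - s) * (1 / ((n + 2 : ℕ) : ℂ)) ^ (k + 1) := by
  have h0 : ((n + 2 : ℕ) : ℂ) ≠ 0 := by exact_mod_cast Nat.succ_ne_zero (n + 1)
  rw [one_div, ← Complex.cpow_neg, one_div, inv_pow, ← Complex.cpow_natCast, ← Complex.cpow_neg,
    ← Complex.cpow_add _ _ h0]
  congr 1
  push_cast
  ring

lemma hasSum_row (s : ℂ) (n : ℕ) :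
    HasSum (fun k : ℕ => pochZ (s - 1) k * (1 / ((n + 2 : ℕ) : ℂ) ^ (s + k)))
      (((n + 1 : ℕ) : ℂ) ^ (1 - s) - ((n + 2 : ℕ) : ℂ) ^ (1 - s)) := by
  have h0 : ((n + 2 : ℕ) : ℂ) ≠ 0 := by exact_mod_cast Nat.succ_ne_zero (n + 1)
  have h0' : ((n + 2 : ℕ) : ℝ) ≠ 0 := by exact_mod_cast Nat.succ_ne_zero (n + 1)
  have hx : ‖1 / ((n + 2 : ℕ) : ℂ)‖ < 1 := by
    rw [norm_div, norm_one, Complex.norm_natCast, div_lt_one (by positivity)]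
    push_cast
    linarith [(Nat.cast_nonneg n : (0 : ℝ) ≤ n)]
  have h := (hasSum_pochZ (s - 1) _ hx).mul_left (((n + 2 : ℕ) : ℂ) ^ (1 - s))
  have hmul : ((n + 1 : ℕ) : ℂ) ^ (1 - s)
      = ((n + 2 : ℕ) : ℂ) ^ (1 - s) * (1 - 1 / ((n + 2 : ℕ) : ℂ)) ^ (1 - s) := by
    have hq : (1 - 1 / ((n + 2 : ℕ) : ℂ)) = (((n + 1 : ℕ) / (n + 2 : ℕ) : ℝ) : ℂ) := by
      push_cast at h0 ⊢
      field_simp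
      ring
    have h2 : ((n + 2 : ℕ) : ℂ) = (((n + 2 : ℕ) : ℝ) : ℂ) := by simp
    rw [hq, h2, ← Complex.mul_cpow_ofReal_nonneg (by positivity) (by positivity),
      ← Complex.ofReal_mul, mul_div_cancel₀ _ h0', Complex.ofReal_natCast]
  have hval : ((n + 1 : ℕ) : ℂ) ^ (1 - s) - ((n + 2 : ℕ) : ℂ) ^ (1 - s)
      = ((n + 2 : ℕ) : ℂ) ^ (1 - s) * (1 / (1 - 1 / ((n + 2 : ℕ) : ℂ)) ^ (s - 1) - 1) := by
    rw [hmul, one_div ((1 - 1 / ((n + 2 : ℕ) : ℂ)) ^ (s - 1)), ← Complex.cpow_neg, neg_sub]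
    ring
  rw [hval]
  have hterm : (fun k : ℕ => pochZ (s - 1) k * (1 / ((n + 2 : ℕ) : ℂ) ^ (s + k)))
      = fun k : ℕ => ((n + 2 : ℕ) : ℂ) ^ (1 - s) *
        (pochZ (s - 1) k * (1 / ((n + 2 : ℕ) : ℂ)) ^ (k + 1)) := by
    funext k
    rw [one_div_cpow_add_nat]
    ring
  rw [hterm]
  exact h

lemma summable_norm_double (s : ℂ) (hs : 1 < s.re) :
    Summable (fun p : ℕ × ℕ =>
      ‖pochZ (s - 1) p.2 * (1 / ((p.1 + 2 : ℕ) : ℂ) ^ (s + (p.2 : ℂ)))‖) := by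
  have hu : Summable (fun n : ℕ => 1 / ((n + 2 : ℕ) : ℝ) ^ s.re) :=
    (summable_nat_add_iff 2).2 (Real.summable_one_div_nat_rpow.2 hs)
  refine .of_nonneg_of_le (fun _ => norm_nonneg _) (fun p => ?_)
    (hu.mul_of_nonneg (summable_norm_pochZ (s - 1)) (fun n => by positivity)
      (fun k => by positivity))
  obtain ⟨n, k⟩ := p
  have hpos : (0 : ℝ) < ((n + 2 : ℕ) : ℝ) := by positivity
  have hhalf : (1 / ((n + 2 : ℕ) : ℝ)) ^ k ≤ (1 / 2 : ℝ) ^ k := by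
    gcongr
    push_cast
    linarith [(Nat.cast_nonneg n : (0 : ℝ) ≤ n)]
  have hn : ‖1 / ((n + 2 : ℕ) : ℂ) ^ (s + (k : ℂ))‖
      = 1 / ((n + 2 : ℕ) : ℝ) ^ s.re * (1 / ((n + 2 : ℕ) : ℝ)) ^ k := by
    rw [norm_div, norm_one, Complex.norm_natCast_cpow_of_pos (by positivity), Complex.add_re,
      Complex.natCast_re, Real.rpow_add hpos, Real.rpow_natCast, one_div_pow, one_div_mul_one_div]
  simp only [norm_mul]
  rw [hn]
  calc ‖pochZ (s - 1) k‖ * (1 / ((n + 2 : ℕ) : ℝ) ^ s.re * (1 / ((n + 2 : ℕ) : ℝ)) ^ k)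
      ≤ ‖pochZ (s - 1) k‖ * (1 / ((n + 2 : ℕ) : ℝ) ^ s.re * (1 / 2 : ℝ) ^ k) := by gcongr
    _ = _ := by ring

lemma hasSum_col (s : ℂ) (hs : 1 < s.re) (k : ℕ) :
    HasSum (fun n : ℕ => pochZ (s - 1) k * (1 / ((n + 2 : ℕ) : ℂ) ^ (s + k)))
      (pochZ (s - 1) k * (riemannZeta (s + k) - 1)) := by
  have hsk : 1 < (s + k).re := by
    simp only [Complex.add_re, Complex.natCast_re]
    linarith [(Nat.cast_nonneg k : (0 : ℝ) ≤ k)]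
  have hsum : Summable (fun n : ℕ => 1 / ((n + 1 : ℕ) : ℂ) ^ (s + k)) :=
    (summable_nat_add_iff 1 (f := fun n : ℕ => 1 / (n : ℂ) ^ (s + k))).2
      (Complex.summable_one_div_nat_cpow.2 hsk)
  have hz : HasSum (fun n : ℕ => 1 / ((n + 1 : ℕ) : ℂ) ^ (s + k)) (riemannZeta (s + k)) := by
    rw [zeta_eq_tsum_one_div_nat_add_one_cpow hsk]
    simpa using hsum.hasSum
  rw [← hasSum_nat_add_iff' 1] at hz
  simpa [add_assoc, one_add_one_eq_two] using hz.mul_left (pochZ (s - 1) k)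

lemma tendsto_natCast_cpow_one_sub (s : ℂ) (hs : 1 < s.re) :
    Filter.Tendsto (fun n : ℕ => ((n + 1 : ℕ) : ℂ) ^ (1 - s)) Filter.atTop (nhds 0) := by
  rw [tendsto_zero_iff_norm_tendsto_zero]
  have h := ((tendsto_rpow_neg_atTop (sub_pos.2 hs)).comp
    (tendsto_natCast_atTop_atTop (R := ℝ))).comp (Filter.tendsto_add_atTop_nat 1)
  refine h.congr fun n => ?_
  rw [Complex.norm_natCast_cpow_of_pos (Nat.succ_pos n)]
  simp

/-- **Ramanujan's identity.** For `Re(s) > 1`, the series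
`∑_{k≥0} (s−1)_k (ζ(s+k) − 1)` converges absolutely and its sum equals `1`. -/
theorem stmt_0 (s : ℂ) (hs : 1 < s.re) :
    Summable (fun k : ℕ => ‖pochZ (s - 1) k * (riemannZeta (s + k) - 1)‖) ∧
    ∑' k : ℕ, pochZ (s - 1) k * (riemannZeta (s + k) - 1) = 1 := by
  have hN := summable_norm_double s hs
  have hF := hN.of_norm
  have hN' := hN.prod_symm
  constructor
  · refine .of_nonneg_of_le (fun _ => norm_nonneg _) (fun k => ?_) hN'.prod
    rw [← (hasSum_col s hs k).tsum_eq]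
    exact norm_tsum_le_tsum_norm (hN'.prod_factor k)
  · have hrows := hF.hasSum.prod_fiberwise (fun n => hasSum_row s n)
    have hcols := hF.prod_symm.hasSum.prod_fiberwise (fun k => hasSum_col s hs k)
    have hlim := (tendsto_natCast_cpow_one_sub s hs).const_sub 1
    have htel := hrows.tendsto_sum_nat
    have hpartial : ∀ N : ℕ, ∑ n ∈ Finset.range N,
        (((n + 1 : ℕ) : ℂ) ^ (1 - s) - ((n + 2 : ℕ) : ℂ) ^ (1 - s))
        = 1 - ((N + 1 : ℕ) : ℂ) ^ (1 - s) := by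
      intro N
      rw [Finset.sum_range_sub' (fun n : ℕ => ((n + 1 : ℕ) : ℂ) ^ (1 - s))]
      simp
    simp only [hpartial] at htel
    have hone := tendsto_nhds_unique htel hlim
    rw [sub_zero] at hone
    refine hcols.tsum_eq.trans (Eq.trans ?_ hone)
    exact (Equiv.prodComm ℕ ℕ).tsum_eq (fun p : ℕ × ℕ =>
      pochZ (s - 1) p.2 * (1 / ((p.1 + 2 : ℕ) : ℂ) ^ (s + (p.2 : ℂ))))
end

section
/- Let r ≥ 1 be an integer. For every compact subset K of U_r, the family of functions (s_1,…,s_r) ↦ n_1^{−s_1}⋯n_r^{−s_r}, indexed by integer tuples n_1 > n_2 > ⋯ > n_r > 0, converges normally on K; that is, ∑_{n_1>⋯>n_r>0} sup_{(s_1,…,s_r)∈K} |n_1^{−s_1}⋯n_r^{−s_r}| < ∞. -/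
/-!
Write `σ_i = Re s_i`. By compactness there is one `c > 1` with `σ_1 + ⋯ + σ_i ≥ i c` for all `i`
and all `s ∈ K` (`exists_one_lt_forall_mul_le`). Since `log n_1 ≥ ⋯ ≥ log n_r ≥ 0`, summation by
parts (`mul_sum_le_sum_mul`) applied to the weights `σ_i - c`, whose partial sums are nonnegative,
gives `∑ σ_i log n_i ≥ c ∑ log n_i`, that is `|n_1^{-s_1} ⋯ n_r^{-s_r}| ≤ ∏ n_i^{-c}` on `K`.
The right-hand side is summable even over all tuples of natural numbers, its sum being the `r`-th
power of a convergent `p`-series (`summable_pi_prod`).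
-/

open Complex

/-- An inequality form of summation by parts: if `L` is antitone and bounded below by `d`, and all
partial sums of `a` are nonnegative, then replacing `L` by the constant `d` decreases `∑ a_i L_i`.
Keeping `d` general lets the induction take for `d` the last value of `L`. -/
theorem mul_sum_le_sum_mul : ∀ (m : ℕ) (a L : Fin m → ℝ) (d : ℝ), Antitone L → (∀ i, d ≤ L i) →
    (∀ i, 0 ≤ ∑ j ∈ Finset.Iic i, a j) → d * ∑ i, a i ≤ ∑ i, a i * L i
  | 0, _, _, _, _, _, _ => by simp
  | m + 1, a, L, d, hL, hd, ha => by
    have ih := mul_sum_le_sum_mul m (fun i => a i.castSucc) (fun i => L i.castSucc) (L (Fin.last m))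
      (fun i j hij => hL (Fin.castSucc_le_castSucc_iff.mpr hij)) (fun i => hL (Fin.le_last _))
      (fun i => by
        have h := ha i.castSucc
        rwa [← Fin.map_castSuccEmb_Iic, Finset.sum_map] at h)
    have htot := ha (Fin.last m)
    rw [← Fin.top_eq_last, Finset.Iic_top] at htot
    have h1 := mul_le_mul_of_nonneg_right (hd (Fin.last m)) htot
    rw [Fin.sum_univ_castSucc] at h1 ⊢
    rw [Fin.sum_univ_castSucc (fun i => a i * L i)]
    linarith

/-- A sum over tuples of a product of one-variable terms is summable, because a finite set of
tuples lies in a box, over which the sum factors. -/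
theorem summable_pi_prod (m : ℕ) (f : ℕ → ℝ) (hf : Summable f) (h0 : ∀ k, 0 ≤ f k) :
    Summable (fun n : Fin m → ℕ => ∏ i, f (n i)) := by
  refine summable_of_sum_le (c := ∏ _i : Fin m, ∑' k, f k)
    (fun n => Finset.prod_nonneg fun i _ => h0 _) fun u => ?_
  calc ∑ n ∈ u, ∏ i, f (n i)
      ≤ ∑ n ∈ Fintype.piFinset (fun i => u.image fun n => n i), ∏ i, f (n i) :=
        Finset.sum_le_sum_of_subset_of_nonneg
          (fun n hn => Fintype.mem_piFinset.mpr fun i => Finset.mem_image_of_mem _ hn)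
          (fun n _ _ => Finset.prod_nonneg fun i _ => h0 _)
    _ = ∏ i, ∑ k ∈ u.image (fun n => n i), f k := by
        rw [Finset.prod_univ_sum]
    _ ≤ ∏ _i : Fin m, ∑' k, f k :=
        Finset.prod_le_prod (fun i _ => Finset.sum_nonneg fun k _ => h0 k)
          (fun i _ => hf.sum_le_tsum _ fun k _ => h0 k)

/-- On a compact subset of `U_r` the strict inequalities `Re (s_1 + ⋯ + s_i) > i` improve
uniformly, by a common factor. -/
theorem exists_one_lt_forall_mul_le (r : ℕ) (K : Set (Fin (r + 1) → ℂ)) (hK : IsCompact K)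
    (hKU : K ⊆ Ur (r + 1) 0) :
    ∃ c : ℝ, 1 < c ∧ ∀ s ∈ K, ∀ i : Fin (r + 1),
      ((i : ℕ) + 1 : ℝ) * c ≤ ∑ j ∈ Finset.Iic i, (s j).re := by
  have hcont : Continuous fun s : Fin (r + 1) → ℂ => Finset.univ.inf' Finset.univ_nonempty
      fun i : Fin (r + 1) => (∑ j ∈ Finset.Iic i, (s j).re) / ((i : ℕ) + 1 : ℝ) :=
    Continuous.finset_inf'_apply _ fun i _ => by fun_prop
  obtain ⟨c, hc, h⟩ := hK.exists_forall_le' hcont.continuousOn (a := 1) fun s hs => by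
    refine (Finset.lt_inf'_iff _).mpr fun i _ => ?_
    have h := hKU hs i
    rw [Complex.re_sum] at h
    rw [lt_div_iff₀ (by positivity)]
    simpa using h
  refine ⟨c, hc, fun s hs i => ?_⟩
  have h1 := (h s hs).trans (Finset.inf'_le _ (Finset.mem_univ i))
  rw [le_div_iff₀ (by positivity)] at h1
  linarith

theorem norm_term_le {m : ℕ} (c : ℝ) (s : Fin m → ℂ)
    (hs : ∀ i : Fin m, ((i : ℕ) + 1 : ℝ) * c ≤ ∑ j ∈ Finset.Iic i, (s j).re) (n : DTuple m) :
    ‖∏ i, rpowC (n.1 i : ℝ) (-(s i))‖ ≤ ∏ i, (n.1 i : ℝ) ^ (-c) := by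
  have hpos : ∀ i, (0 : ℝ) < n.1 i := fun i => Nat.cast_pos.mpr (n.2.2 i)
  have key := mul_sum_le_sum_mul m (fun i => (s i).re - c) (fun i => Real.log (n.1 i)) 0
    (fun i j hij => Real.log_le_log (hpos j) (Nat.cast_le.mpr (n.2.1.antitone hij)))
    (fun i => Real.log_natCast_nonneg _)
    (fun i => by
      have h := hs i
      simp only [Finset.sum_sub_distrib, Finset.sum_const, Fin.card_Iic, nsmul_eq_mul]
      push_cast
      linarith)
  simp only [sub_mul, Finset.sum_sub_distrib, zero_mul] at key
  rw [norm_prod]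
  simp only [rpowC, Complex.norm_exp, Real.rpow_def_of_pos (hpos _), ← Real.exp_sum]
  refine Real.exp_le_exp.mpr ?_
  simp only [Complex.re_mul_ofReal, Complex.neg_re, neg_mul, mul_neg, Finset.sum_neg_distrib,
    mul_comm (Real.log _) c]
  linarith

/-- For `r ≥ 1` and every compact `K ⊆ U_r`, the family
`(s_1,…,s_r) ↦ n_1^{−s_1}⋯n_r^{−s_r}`, indexed by tuples `n_1 > ⋯ > n_r > 0`,
converges normally on `K`. -/
theorem stmt_2 (r : ℕ) (K : Set (Fin (r + 1) → ℂ)) (hK : IsCompact K)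
    (hKU : K ⊆ Ur (r + 1) 0) :
    Summable (fun n : DTuple (r + 1) =>
      ⨆ s : K, ‖∏ i, rpowC ((n.1 i : ℝ)) (-(s.1 i))‖) := by
  obtain ⟨c, hc, h⟩ := exists_one_lt_forall_mul_le r K hK hKU
  have hsum : Summable fun n : DTuple (r + 1) => ∏ i, (n.1 i : ℝ) ^ (-c) :=
    (summable_pi_prod (r + 1) (fun k => (k : ℝ) ^ (-c))
      (Real.summable_nat_rpow.mpr (by linarith)) fun k => by positivity).comp_injective
      Subtype.val_injective
  refine hsum.of_nonneg_of_le (fun n => Real.iSup_nonneg fun s => norm_nonneg _) fun n => ?_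
  -- `Real.iSup_le` also covers empty `K`, where the supremum is `0` by convention.
  exact Real.iSup_le (fun s => norm_term_le c s.1 (h s.1 s.2) n) (by positivity)
end

section
/- Let r ≥ 1 be an integer and λ_1,…,λ_r, α_1,…,α_r ∈ [0,1). For every compact subset K of U_r, the family of functions (s_1,…,s_r) ↦ e(λ_1 n_1)⋯e(λ_r n_r) / ((n_1+α_1)^{s_1}⋯(n_r+α_r)^{s_r}), indexed by integer tuples n_1 > ⋯ > n_r > 0, converges normally on K. In particular, the sum L_r(λ_1,…,λ_r; α_1,…,α_r; s_1,…,s_r) of this family defines a holomorphic function on U_r. -/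
/-!
Write `a i = log (n i + α i)`; along a strictly decreasing tuple these numbers are nonnegative and
antitone (as `α i ∈ [0,1)`), and the term of index `n` has modulus `exp (-∑ Re (s i) * a i)`.
On a compact subset of `U_r` there is `c > 0` with `Re (s 0 + ⋯ + s i) ≥ (i + 1) (1 + c)`, so the
partial sums of `Re (s i) - (1 + c)` are nonnegative and Abel summation
(`sum_mul_nonneg_of_partial_sums`) gives `∑ Re (s i) * a i ≥ (1 + c) ∑ a i`. Hence the term is at
most `∏ (n i + α i) ^ (-(1 + c)) ≤ ∏ n i ^ (-(1 + c))`, which is summable even over all tuples, as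
a product of summable series in one variable. This is the normal convergence.

For analyticity at `p`, the term at `p + h` is the term at `p` times `exp (-∑ h i * a i)`. Expanding
the exponential gives a double series over `n` and the degree `k`, absolutely convergent for
`‖h‖ < c / 2`, since the extra factor `exp (c / 2 * ∑ a i)` is absorbed by the bound above. Summing
over `n` first yields a power series expansion (`analyticAt_tsum_mul_cexp`).
-/

open Complex

/-! ### Abel summation and products of series -/

/-- Abel summation: if `a` is antitone and bounded below by `m`, and the partial sums of `t` are
nonnegative, then `∑ t i * a i ≥ (∑ t i) * m`. -/
lemma sum_mul_le_of_partial_sums : ∀ (r : ℕ) (t a : Fin r → ℝ) (m : ℝ), Antitone a →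
    (∀ i, m ≤ a i) → (∀ i, 0 ≤ ∑ j ∈ Finset.Iic i, t j) →
    (∑ i, t i) * m ≤ ∑ i, t i * a i := by
  intro r
  induction r with
  | zero => intro t a m _ _ _; simp
  | succ r ih =>
    intro t a m ha hm ht
    have h1 := ih (fun i => t i.castSucc) (fun i => a i.castSucc) (a (Fin.last r))
      (fun i j hij => ha (Fin.castSucc_le_castSucc_iff.2 hij))
      (fun i => ha (Fin.le_last _))
      (fun i => by
        have := ht i.castSucc
        rwa [← Fin.map_castSuccEmb_Iic, Finset.sum_map] at this)
    have h2 := ht (Fin.last r)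
    have h3 : Finset.Iic (Fin.last r) = Finset.univ := by
      ext i; simp [Fin.le_last]
    rw [h3] at h2
    calc (∑ i, t i) * m ≤ (∑ i, t i) * a (Fin.last r) := by gcongr; exact hm _
      _ ≤ _ := by
        rw [Fin.sum_univ_castSucc, Fin.sum_univ_castSucc, add_mul]
        linarith

lemma sum_mul_nonneg_of_partial_sums {r : ℕ} (t a : Fin r → ℝ) (ha : Antitone a)
    (ha0 : ∀ i, 0 ≤ a i) (ht : ∀ i, 0 ≤ ∑ j ∈ Finset.Iic i, t j) :
    0 ≤ ∑ i, t i * a i := by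
  simpa using sum_mul_le_of_partial_sums r t a 0 ha ha0 ht

lemma summable_prod_pi (f : ℕ → ℝ) (hf : Summable f) (hf0 : 0 ≤ f) :
    ∀ r : ℕ, Summable (fun n : Fin r → ℕ => ∏ i, f (n i)) := by
  intro r
  induction r with
  | zero => exact Summable.of_finite
  | succ r ih =>
    rw [← (Fin.consEquiv (fun _ : Fin (r + 1) => ℕ)).summable_iff]
    refine (hf.mul_of_nonneg ih hf0 (fun n => Finset.prod_nonneg fun i _ => hf0 _)).congr ?_
    intro x
    simp [Fin.prod_univ_succ, Fin.consEquiv]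

/-! ### Analyticity of sums of exponentials -/

/-- A superposition `∑ c n * exp (L n y)` of exponentials of linear forms in the displacement `y`
from `p` is analytic at `p` if the majorants of its terms on the ball `‖y‖ ≤ ρ` are summable. The
sum over `n` of the degree `k` Taylor terms is the degree `k` term of the power series. -/
lemma analyticAt_tsum_mul_cexp {ι E : Type*} [NormedAddCommGroup E] [NormedSpace ℂ E]
    (c : ι → ℂ) (L : ι → E →L[ℂ] ℂ) (p : E) (ρ : ℝ) (hρ : 0 < ρ)
    (hs : Summable fun n => ‖c n‖ * Real.exp (‖L n‖ * ρ)) (F : E → ℂ)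
    (hF : ∀ y, F (p + y) = ∑' n, c n * Complex.exp (L n y)) : AnalyticAt ℂ F p := by
  let q : ι → FormalMultilinearSeries ℂ E ℂ := fun n k =>
    (c n * (k.factorial : ℂ)⁻¹) •
      (ContinuousMultilinearMap.mkPiAlgebraFin ℂ k ℂ).compContinuousLinearMap (fun _ => L n)
  have hq_apply : ∀ n k y, q n k (fun _ => y) = c n * (L n y ^ k / k.factorial) := by
    intro n k y
    simp [q]
    ring
  have hq_norm : ∀ n k, ‖q n k‖ ≤ ‖c n‖ * (‖L n‖ ^ k / k.factorial) := by
    intro n k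
    have h1 := ContinuousMultilinearMap.norm_compContinuousLinearMap_le
      (ContinuousMultilinearMap.mkPiAlgebraFin ℂ k ℂ) (fun _ => L n)
    rw [ContinuousMultilinearMap.norm_mkPiAlgebraFin, one_mul, Finset.prod_const,
      Finset.card_univ, Fintype.card_fin] at h1
    calc ‖q n k‖ = ‖c n‖ * (k.factorial : ℝ)⁻¹ * _ := by
          simp only [q]; rw [norm_smul, norm_mul, norm_inv, Complex.norm_natCast]
      _ ≤ ‖c n‖ * (k.factorial : ℝ)⁻¹ * ‖L n‖ ^ k := by gcongr
      _ = _ := by ring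
  have hexp : ∀ x : ℝ, HasSum (fun k : ℕ => x ^ k / k.factorial) (Real.exp x) := fun x => by
    rw [Real.exp_eq_exp_ℝ]; exact NormedSpace.expSeries_div_hasSum_exp x
  have hcexp : ∀ x : ℂ, HasSum (fun k : ℕ => x ^ k / k.factorial) (Complex.exp x) := fun x => by
    rw [Complex.exp_eq_exp_ℂ]; exact NormedSpace.expSeries_div_hasSum_exp x
  have hmaj : Summable fun x : ι × ℕ => ‖c x.1‖ * ((‖L x.1‖ * ρ) ^ x.2 / x.2.factorial) := by
    refine (summable_prod_of_nonneg (fun x => by dsimp; positivity)).2 ⟨fun n => ?_, ?_⟩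
    · exact ((hexp (‖L n‖ * ρ)).mul_left ‖c n‖).summable
    · refine hs.congr fun n => ?_
      exact ((hexp (‖L n‖ * ρ)).mul_left ‖c n‖).tsum_eq.symm
  have hqs : Summable fun x : ι × ℕ => ‖q x.1 x.2‖ * ρ ^ x.2 := by
    refine Summable.of_nonneg_of_le (fun x => by positivity) (fun x => ?_) hmaj
    calc _ ≤ ‖c x.1‖ * (‖L x.1‖ ^ x.2 / x.2.factorial) * ρ ^ x.2 := by
          gcongr; exact hq_norm _ _
      _ = _ := by rw [mul_pow]; ring
  have hqs' : Summable fun x : ℕ × ι => ‖q x.2 x.1‖ * ρ ^ x.1 :=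
    (Equiv.prodComm ℕ ι).summable_iff.2 hqs
  have hqk : ∀ k, Summable fun n => ‖q n k‖ := fun k => by
    have := hqs'.prod_factor k
    exact (summable_mul_right_iff (pow_pos hρ k).ne').1 this
  let P : FormalMultilinearSeries ℂ E ℂ := fun k => ∑' n, q n k
  have hball : HasFPowerSeriesOnBall F P p (ENNReal.ofReal ρ) := by
    refine ⟨?_, by simpa using hρ, ?_⟩
    · have hr : Summable fun k => ‖P k‖ * ((ρ.toNNReal : NNReal) : ℝ) ^ k := by
        rw [Real.coe_toNNReal _ hρ.le]
        refine Summable.of_nonneg_of_le (fun k => by positivity) (fun k => ?_) hqs'.prod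
        calc ‖P k‖ * ρ ^ k ≤ (∑' n, ‖q n k‖) * ρ ^ k :=
              mul_le_mul_of_nonneg_right (norm_tsum_le_tsum_norm (hqk k)) (pow_nonneg hρ.le k)
          _ = ∑' n, ‖q n k‖ * ρ ^ k := tsum_mul_right.symm
      exact P.le_radius_of_summable hr
    · intro y hy
      have hy' : ‖y‖ < ρ := by
        rw [Metric.eball_ofReal] at hy
        simpa using hy
      have hsum : Summable fun x : ι × ℕ => q x.1 x.2 (fun _ => y) := by
        refine Summable.of_norm_bounded hqs (fun x => ?_)
        refine ((q x.1 x.2).le_opNorm _).trans ?_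
        simp only [Finset.prod_const, Finset.card_univ, Fintype.card_fin]
        gcongr
      have hP : ∀ k, HasSum (fun n => q n k (fun _ => y)) (P k fun _ => y) := fun k =>
        ((hqk k).of_norm.hasSum).mapL
          (ContinuousMultilinearMap.apply ℂ (fun _ : Fin k => E) ℂ (fun _ => y))
      have h1 : HasSum (fun n => c n * Complex.exp (L n y)) (∑' x : ι × ℕ, q x.1 x.2 fun _ => y) :=
        hsum.hasSum.prod_fiberwise fun n => by
          simpa only [hq_apply] using (hcexp (L n y)).mul_left (c n)
      rw [hF, h1.tsum_eq]
      exact ((Equiv.prodComm ℕ ι).hasSum_iff.2 hsum.hasSum).prod_fiberwise hP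
  exact hball.analyticAt

/-! ### Bounds on the terms of the multiple Lerch series -/

lemma one_le_add {r : ℕ} {al : Fin r → ℝ} (hal : ∀ i, al i ∈ Set.Ico (0 : ℝ) 1)
    (n : DTuple r) (i : Fin r) : (1 : ℝ) ≤ (n.1 i : ℝ) + al i := by
  have h1 : (1 : ℝ) ≤ n.1 i := by exact_mod_cast n.2.2 i
  linarith [(hal i).1]

lemma log_nonneg' {r : ℕ} {al : Fin r → ℝ} (hal : ∀ i, al i ∈ Set.Ico (0 : ℝ) 1)
    (n : DTuple r) (i : Fin r) : 0 ≤ Real.log ((n.1 i : ℝ) + al i) :=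
  Real.log_nonneg (one_le_add hal n i)

lemma antitone_log {r : ℕ} {al : Fin r → ℝ} (hal : ∀ i, al i ∈ Set.Ico (0 : ℝ) 1)
    (n : DTuple r) : Antitone fun i => Real.log ((n.1 i : ℝ) + al i) := by
  intro i j hij
  rcases hij.eq_or_lt with rfl | h
  · exact le_rfl
  have h1 : ((n.1 j : ℝ) + 1) ≤ n.1 i := by exact_mod_cast n.2.1 h
  have := one_le_add hal n j
  exact Real.log_le_log (by linarith) (by linarith [(hal i).1, (hal j).2])

lemma norm_lerchTerm {r : ℕ} (lam al : Fin r → ℝ) (s : Fin r → ℂ) (n : Fin r → ℕ) :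
    ‖lerchTerm lam al s n‖ =
      Real.exp (-∑ i, (s i).re * Real.log ((n i : ℝ) + al i)) := by
  have h1 : ∀ a : ℝ, ‖eR a‖ = 1 := fun a => by
    rw [eR, Complex.norm_exp]
    simp
  simp only [lerchTerm, norm_div, norm_prod, h1, rpowC, Complex.norm_exp, Complex.re_mul_ofReal,
    Finset.prod_const_one, ← Real.exp_sum, Real.exp_neg, one_div]

/-- A uniform margin `c` in the inequalities defining `U_r` bounds the term by
`∏ (n i + α i) ^ (-(1 + c))`, by Abel summation applied to `Re (s i) - (1 + c)`. -/
lemma norm_lerchTerm_le {r : ℕ} {lam al : Fin r → ℝ} (hal : ∀ i, al i ∈ Set.Ico (0 : ℝ) 1)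
    {s : Fin r → ℂ} {c : ℝ}
    (hs : ∀ i : Fin r, ((i : ℕ) + 1) * (1 + c) ≤ (∑ j ∈ Finset.Iic i, s j).re) (n : DTuple r) :
    ‖lerchTerm lam al s n.1‖ ≤
      Real.exp (-((1 + c) * ∑ i, Real.log ((n.1 i : ℝ) + al i))) := by
  rw [norm_lerchTerm]
  have h := sum_mul_nonneg_of_partial_sums (fun i => (s i).re - (1 + c)) _ (antitone_log hal n)
    (log_nonneg' hal n) (fun i => by
      have := hs i
      rw [Complex.re_sum] at this
      rw [Finset.sum_sub_distrib, Finset.sum_const, Fin.card_Iic, nsmul_eq_mul]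
      push_cast
      linarith)
  simp only [sub_mul, Finset.sum_sub_distrib, ← Finset.mul_sum] at h
  exact Real.exp_le_exp.2 (by linarith)

lemma summable_exp_neg {r : ℕ} {al : Fin r → ℝ} (hal : ∀ i, al i ∈ Set.Ico (0 : ℝ) 1)
    {c : ℝ} (hc : 0 < c) :
    Summable fun n : DTuple r =>
      Real.exp (-((1 + c) * ∑ i, Real.log ((n.1 i : ℝ) + al i))) := by
  have h1 : Summable fun m : ℕ => (m : ℝ) ^ (-(1 + c)) :=
    Real.summable_nat_rpow.2 (by linarith)
  have h2 := (summable_prod_pi _ h1 (fun m => by positivity) r).comp_injective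
    (Subtype.val_injective : Function.Injective
      (Subtype.val : {n : Fin r → ℕ // StrictAnti n ∧ ∀ i, 0 < n i} → _))
  refine Summable.of_nonneg_of_le (fun n => (Real.exp_pos _).le) (fun n => ?_) h2
  rw [Finset.mul_sum, ← Finset.sum_neg_distrib, Real.exp_sum]
  refine Finset.prod_le_prod (fun i _ => (Real.exp_pos _).le) fun i _ => ?_
  have hn : (0 : ℝ) < n.1 i := by exact_mod_cast n.2.2 i
  rw [Real.rpow_def_of_pos hn]
  have h3 : Real.log (n.1 i : ℝ) ≤ Real.log ((n.1 i : ℝ) + al i) :=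
    Real.log_le_log hn (by linarith [(hal i).1])
  apply Real.exp_le_exp.2
  nlinarith

/-- On a compact subset of `U_r` the defining inequalities hold with a uniform margin. -/
lemma exists_margin {r : ℕ} {K : Set (Fin r → ℂ)} (hK : IsCompact K) (hKU : K ⊆ Ur r 0) :
    ∃ c : ℝ, 0 < c ∧ ∀ i : Fin r, ∀ s ∈ K,
      ((i : ℕ) + 1) * (1 + c) ≤ (∑ j ∈ Finset.Iic i, s j).re := by
  have h : ∀ i : Fin r, ∀ᶠ c : ℝ in nhdsWithin 0 (Set.Ioi 0), ∀ s ∈ K,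
      ((i : ℕ) + 1) * (1 + c) ≤ (∑ j ∈ Finset.Iic i, s j).re := by
    intro i
    rcases K.eq_empty_or_nonempty with rfl | hne
    · simp
    obtain ⟨s₀, hs₀, hmin⟩ := hK.exists_isMinOn hne
      (f := fun s : Fin r → ℂ => (∑ j ∈ Finset.Iic i, s j).re) (by fun_prop)
    have h0 := hKU hs₀ i
    simp only [Int.cast_zero, sub_zero] at h0
    have hcont : Filter.Tendsto (fun c : ℝ => ((i : ℕ) + 1 : ℝ) * (1 + c)) (nhds 0)
        (nhds (((i : ℕ) + 1 : ℝ) * (1 + 0))) :=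
      Continuous.tendsto (by fun_prop) 0
    rw [add_zero, mul_one] at hcont
    filter_upwards [nhdsWithin_le_nhds (hcont.eventually_lt_const h0)] with c hc s hs
    exact hc.le.trans (hmin hs)
  obtain ⟨c, hc, hc0⟩ := ((Filter.eventually_all.2 h).and self_mem_nhdsWithin).exists
  exact ⟨c, hc0, hc⟩

/-! ### Dependence of the terms on `s` -/

/-- The linear form `h ↦ -∑ h i * a i`. -/
noncomputable def negDot {r : ℕ} (a : Fin r → ℝ) : (Fin r → ℂ) →L[ℂ] ℂ :=
  -∑ i, (a i : ℂ) • ContinuousLinearMap.proj (R := ℂ) (φ := fun _ : Fin r => ℂ) i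

lemma negDot_apply {r : ℕ} (a : Fin r → ℝ) (h : Fin r → ℂ) :
    negDot a h = -∑ i, h i * a i := by
  simp [negDot, mul_comm]

lemma norm_negDot_le {r : ℕ} (a : Fin r → ℝ) (ha : ∀ i, 0 ≤ a i) : ‖negDot a‖ ≤ ∑ i, a i := by
  refine ContinuousLinearMap.opNorm_le_bound _ (Finset.sum_nonneg fun i _ => ha i) fun h => ?_
  rw [negDot_apply, norm_neg, Finset.sum_mul]
  refine norm_sum_le_of_le _ fun i _ => ?_
  rw [norm_mul, Complex.norm_real, Real.norm_of_nonneg (ha i), mul_comm]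
  exact mul_le_mul_of_nonneg_left (norm_le_pi_norm h i) (ha i)

lemma lerchTerm_add {r : ℕ} (lam al : Fin r → ℝ) (s h : Fin r → ℂ) (n : Fin r → ℕ) :
    lerchTerm lam al (s + h) n = lerchTerm lam al s n *
      Complex.exp (negDot (fun i => Real.log ((n i : ℝ) + al i)) h) := by
  simp only [lerchTerm, rpowC, negDot_apply, Pi.add_apply, add_mul, Complex.exp_add,
    Finset.prod_mul_distrib, Complex.exp_neg, ← Complex.exp_sum, div_eq_mul_inv, mul_inv, mul_assoc]

/-- For `r ≥ 1`, `λ_i, α_i ∈ [0,1)`, the family of terms of the multiple Lerch zeta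
function converges normally on every compact subset of `U_r`; in particular its sum
defines a holomorphic function on `U_r`. -/
theorem stmt_3 (r : ℕ) (lam al : Fin (r + 1) → ℝ)
    (hlam : ∀ i, lam i ∈ Set.Ico (0 : ℝ) 1) (hal : ∀ i, al i ∈ Set.Ico (0 : ℝ) 1) :
    (∀ K : Set (Fin (r + 1) → ℂ), IsCompact K → K ⊆ Ur (r + 1) 0 →
      Summable (fun n : DTuple (r + 1) => ⨆ s : K, ‖lerchTerm lam al s.1 n.1‖)) ∧
    AnalyticOnNhd ℂ (multipleLerch lam al) (Ur (r + 1) 0) := by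
  refine ⟨fun K hK hKU => ?_, fun p hp => ?_⟩
  · obtain ⟨c, hc, h⟩ := exists_margin hK hKU
    refine Summable.of_nonneg_of_le (fun n => Real.iSup_nonneg fun s => norm_nonneg _)
      (fun n => ?_) (summable_exp_neg hal hc)
    exact Real.iSup_le (fun s => norm_lerchTerm_le hal (fun i => h i s.1 s.2) n)
      (Real.exp_pos _).le
  · obtain ⟨c, hc, h⟩ := exists_margin (isCompact_singleton (x := p))
      (Set.singleton_subset_iff.2 hp)
    refine analyticAt_tsum_mul_cexp (fun n : DTuple (r + 1) => lerchTerm lam al p n.1)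
      (fun n => negDot fun i => Real.log ((n.1 i : ℝ) + al i)) p (c / 2) (half_pos hc) ?_ _
      (fun y => tsum_congr fun n => lerchTerm_add lam al p y n.1)
    refine Summable.of_nonneg_of_le (fun n => by positivity) (fun n => ?_)
      (summable_exp_neg hal (half_pos hc))
    have h1 := norm_lerchTerm_le (lam := lam) hal (fun i => h i p rfl) n
    have h2 := norm_negDot_le _ (log_nonneg' hal n)
    calc _ ≤ Real.exp (-((1 + c) * ∑ i, Real.log ((n.1 i : ℝ) + al i))) *
          Real.exp ((∑ i, Real.log ((n.1 i : ℝ) + al i)) * (c / 2)) := by gcongr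
      _ = _ := by rw [← Real.exp_add]; ring_nf
end

section
/- Let r ≥ 2 be an integer and λ_1,…,λ_r, α_1,…,α_r ∈ [0,1). For every compact subset K of U_r, the family of functions (s_1,…,s_r) ↦ e(λ_1 n_1)⋯e(λ_r n_r) / ((n_1+α_1−1)^{s_1} (n_2+α_2)^{s_2} ⋯ (n_r+α_r)^{s_r}), indexed by integer tuples n_1 > ⋯ > n_r > 0 (so that n_1 ≥ 2 and n_1+α_1−1 ≥ 1), converges normally on K. -/
/-!
Write `σ_i = Re s_i` and let `b_i` be the bases of the powers. Two facts carry the proof.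

* Since `r ≥ 2` forces `n_1 ≥ 2`, every `b_i` lies in `[n_i / 2, 2 n_i]`, so on a compact set,
  where the `σ_i` are bounded, replacing each `b_i` by `n_i` costs only a constant factor.
* By compactness there is `δ > 0` with `σ_1 + ⋯ + σ_i ≥ i (1 + δ)` on `K` for all `i`. As
  `log n_1 > ⋯ > log n_r ≥ 0`, summation by parts gives
  `∑ σ_i log n_i ≥ (1 + δ) ∑ log n_i`, that is `∏ n_i ^ (-σ_i) ≤ ∏ n_i ^ (-(1 + δ))`.

Hence every term is bounded on `K` by a constant times `∏ n_i ^ (-(1 + δ))`, and the sum of the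
latter over all of `ℕ ^ r` is the `r`-th power of a convergent series.
-/


open Complex

/-- Summation by parts: the weighted sum is at least the smallest weight times the total. -/
lemma last_mul_sum_le (k : ℕ) (d l : Fin (k + 1) → ℝ) (hl : Antitone l)
    (hd : ∀ i, 0 ≤ ∑ j ∈ Finset.Iic i, d j) :
    l (Fin.last k) * ∑ j, d j ≤ ∑ j, d j * l j := by
  induction k with
  | zero => simp [mul_comm]
  | succ k ih =>
    have hsub : ∀ i : Fin (k + 1), ∑ j ∈ Finset.Iic i, d j.castSucc =
        ∑ j ∈ Finset.Iic i.castSucc, d j := by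
      intro i
      rw [← Fin.map_castSuccEmb_Iic, Finset.sum_map]
      rfl
    have h := ih (fun j => d j.castSucc) (fun j => l j.castSucc)
      (fun a b hab => hl (Fin.castSucc_le_castSucc_iff.2 hab))
      (fun i => by rw [hsub]; exact hd _)
    have hS : 0 ≤ ∑ j : Fin (k + 1), d j.castSucc := by
      have := hd (Fin.last k).castSucc
      rw [← hsub] at this
      simpa [← Fin.top_eq_last] using this
    have hll : l (Fin.last (k + 1)) ≤ l (Fin.last k).castSucc := hl (Fin.le_last _)
    rw [Fin.sum_univ_castSucc, Fin.sum_univ_castSucc (f := fun j => d j * l j)]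
    nlinarith [mul_le_mul_of_nonneg_right hll hS]

lemma sum_mul_nonneg_of_partial_sums_s6 (k : ℕ) (d l : Fin (k + 1) → ℝ) (hl : Antitone l)
    (hl0 : ∀ i, 0 ≤ l i) (hd : ∀ i, 0 ≤ ∑ j ∈ Finset.Iic i, d j) :
    0 ≤ ∑ j, d j * l j := by
  refine le_trans (mul_nonneg (hl0 _) ?_) (last_mul_sum_le k d l hl hd)
  simpa [← Fin.top_eq_last] using hd (Fin.last k)

lemma summable_pi_prod_of_nonneg {r : ℕ} (f : ℕ → ℝ) (hf0 : ∀ n, 0 ≤ f n) (hf : Summable f) :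
    Summable (fun n : Fin r → ℕ => ∏ i, f (n i)) := by
  refine summable_of_sum_le (c := (∑' n, f n) ^ r)
    (fun n => Finset.prod_nonneg fun i _ => hf0 _) fun u => ?_
  calc ∑ n ∈ u, ∏ i, f (n i)
      ≤ ∑ n ∈ Fintype.piFinset (fun i => u.image (fun n => n i)), ∏ i, f (n i) := by
        refine Finset.sum_le_sum_of_subset_of_nonneg (fun n hn => ?_)
          (fun n _ _ => Finset.prod_nonneg fun i _ => hf0 _)
        exact Fintype.mem_piFinset.2 fun i => Finset.mem_image_of_mem _ hn
    _ = ∏ i, ∑ m ∈ u.image (fun n => n i), f m := (Finset.prod_univ_sum _ _).symm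
    _ ≤ ∏ _i : Fin r, ∑' n, f n :=
        Finset.prod_le_prod (fun i _ => Finset.sum_nonneg fun m _ => hf0 m)
          fun i _ => hf.sum_le_tsum _ fun m _ => hf0 m
    _ = (∑' n, f n) ^ r := by simp

lemma norm_eR (a : ℝ) : ‖eR a‖ = 1 := by
  have : 2 * Real.pi * Complex.I * a = ((2 * Real.pi * a : ℝ) : ℂ) * Complex.I := by
    push_cast; ring
  rw [eR, this, Complex.norm_exp_ofReal_mul_I]

lemma norm_rpowC (b : ℝ) (z : ℂ) : ‖rpowC b z‖ = Real.exp (z.re * Real.log b) := by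
  rw [rpowC, Complex.norm_exp, Complex.re_mul_ofReal]

lemma abs_log_sub_log_le {b n : ℝ} (hn : 0 < n) (h1 : n / 2 ≤ b) (h2 : b ≤ 2 * n) :
    |Real.log b - Real.log n| ≤ Real.log 2 := by
  have hb : 0 < b := by linarith
  have e1 := Real.log_le_log (by positivity) h1
  have e2 := Real.log_le_log hb h2
  rw [Real.log_div hn.ne' two_ne_zero] at e1
  rw [Real.log_mul two_ne_zero hn.ne'] at e2
  rw [abs_le]
  constructor <;> linarith

/-- The bases of the powers in the modified Lerch term are comparable to the indices; the shift
by `-1` in the first base is harmless because the first index is at least `2`. -/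
lemma abs_log_base_sub_log_le (r : ℕ) (al : Fin (r + 2) → ℝ)
    (hal : ∀ i, al i ∈ Set.Ico (0 : ℝ) 1) (n : DTuple (r + 2)) (i : Fin (r + 2)) :
    |Real.log ((n.1 i : ℝ) + Function.update al 0 (al 0 - 1) i) - Real.log (n.1 i)| ≤
      Real.log 2 := by
  obtain ⟨h0, h1⟩ := hal i
  have hi : (1 : ℝ) ≤ n.1 i := by exact_mod_cast n.2.2 i
  rcases eq_or_ne i 0 with rfl | hne
  · have h2 : n.1 1 < n.1 0 := n.2.1 (by simp)
    have h3 : 0 < n.1 1 := n.2.2 1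
    have h4 : (2 : ℝ) ≤ n.1 0 := by exact_mod_cast (by omega : 2 ≤ n.1 0)
    rw [Function.update_self]
    apply abs_log_sub_log_le <;> linarith
  · rw [Function.update_of_ne hne]
    apply abs_log_sub_log_le <;> linarith

/-- Compactness makes the inequalities defining `U_r` uniform, in the form needed to compare
the exponents with the constant exponent `1 + δ`. -/
lemma exists_uniform_margin (r : ℕ) (K : Set (Fin r → ℂ)) (hK : IsCompact K)
    (hKU : K ⊆ Ur r 0) :
    ∃ δ : ℝ, 0 < δ ∧ ∀ s ∈ K, ∀ i : Fin r,
      ((i : ℕ) + 1 : ℝ) * (1 + δ) ≤ ∑ j ∈ Finset.Iic i, (s j).re := by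
  have key : ∀ i : Fin r, ∀ᶠ δ in nhdsWithin (0 : ℝ) (Set.Ioi 0), ∀ s ∈ K,
      ((i : ℕ) + 1 : ℝ) * (1 + δ) ≤ ∑ j ∈ Finset.Iic i, (s j).re := by
    intro i
    have hc : ContinuousOn (fun s : Fin r → ℂ => ∑ j ∈ Finset.Iic i, (s j).re) K := by
      fun_prop
    obtain ⟨a, ha, hle⟩ := hK.exists_forall_le' hc (a := ((i : ℕ) + 1 : ℝ))
      (fun s hs => by simpa using hKU hs i)
    have ht : Filter.Tendsto (fun δ : ℝ => ((i : ℕ) + 1 : ℝ) * (1 + δ))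
        (nhdsWithin 0 (Set.Ioi 0)) (nhds ((i : ℕ) + 1 : ℝ)) := by
      have : Continuous (fun δ : ℝ => ((i : ℕ) + 1 : ℝ) * (1 + δ)) := by fun_prop
      simpa using (this.tendsto 0).mono_left nhdsWithin_le_nhds
    filter_upwards [ht.eventually_lt_const ha] with δ hδ s hs
    exact hδ.le.trans (hle s hs)
  obtain ⟨δ, h, hpos⟩ := ((Filter.eventually_all.2 key).and self_mem_nhdsWithin).exists
  exact ⟨δ, hpos, fun s hs i => h i s hs⟩

/-- For `r ≥ 2` and every compact `K ⊆ U_r`, the family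
`(s_1,…,s_r) ↦ e(λ_1 n_1)⋯e(λ_r n_r) /
((n_1+α_1−1)^{s_1}(n_2+α_2)^{s_2}⋯(n_r+α_r)^{s_r})`,
indexed by tuples `n_1 > ⋯ > n_r > 0`, converges normally on `K`. -/
theorem stmt_6 (r : ℕ) (lam al : Fin (r + 2) → ℝ)
    (hlam : ∀ i, lam i ∈ Set.Ico (0 : ℝ) 1) (hal : ∀ i, al i ∈ Set.Ico (0 : ℝ) 1)
    (K : Set (Fin (r + 2) → ℂ)) (hK : IsCompact K) (hKU : K ⊆ Ur (r + 2) 0) :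
    Summable (fun n : DTuple (r + 2) =>
      ⨆ s : K, ‖lerchTerm lam (Function.update al 0 (al 0 - 1)) s.1 n.1‖) := by
  obtain ⟨δ, hδ, hmargin⟩ := exists_uniform_margin _ K hK hKU
  obtain ⟨C, hC0, hC⟩ := hK.isBounded.exists_pos_norm_le
  have hsum : Summable (fun n : DTuple (r + 2) => ∏ i, ((n.1 i : ℝ) ^ (1 + δ))⁻¹) :=
    (summable_pi_prod_of_nonneg (fun m : ℕ => ((m : ℝ) ^ (1 + δ))⁻¹) (fun m => by positivity)
      (Real.summable_nat_rpow_inv.2 (by linarith))).comp_injective Subtype.val_injective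
  refine (hsum.mul_left (Real.exp ((r + 2 : ℕ) * (C * Real.log 2)))).of_nonneg_of_le
    (fun n => Real.iSup_nonneg fun s => norm_nonneg _) fun n => ?_
  refine Real.iSup_le (fun ⟨s, hs⟩ => ?_) (by positivity)
  have hpos : ∀ i, (0 : ℝ) < n.1 i := fun i => by exact_mod_cast n.2.2 i
  have hparts : 0 ≤ ∑ i, ((s i).re - (1 + δ)) * Real.log (n.1 i) := by
    refine sum_mul_nonneg_of_partial_sums_s6 _ _ _ (fun a b hab => ?_)
      (fun i => Real.log_natCast_nonneg _) fun i => ?_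
    · exact Real.log_le_log (hpos b) (by exact_mod_cast n.2.1.antitone hab)
    · have := hmargin s hs i
      rw [Finset.sum_sub_distrib]
      simpa [mul_add] using this
  have hcompare : -∑ i, (s i).re * Real.log ((n.1 i : ℝ) + Function.update al 0 (al 0 - 1) i) ≤
      ∑ i, (C * Real.log 2 - (s i).re * Real.log (n.1 i)) := by
    rw [← Finset.sum_neg_distrib]
    refine Finset.sum_le_sum fun i _ => ?_
    have h1 : |(s i).re| ≤ C :=
      (Complex.abs_re_le_norm _).trans ((norm_le_pi_norm s i).trans (hC s hs))
    have h2 := mul_le_mul h1 (abs_log_base_sub_log_le r al hal n i) (abs_nonneg _) hC0.le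
    rw [← abs_mul] at h2
    linarith [neg_abs_le ((s i).re *
      (Real.log ((n.1 i : ℝ) + Function.update al 0 (al 0 - 1) i) - Real.log (n.1 i)))]
  have hprod : ∏ i, ((n.1 i : ℝ) ^ (1 + δ))⁻¹ =
      Real.exp (-∑ i, (1 + δ) * Real.log (n.1 i)) := by
    rw [← Finset.sum_neg_distrib, Real.exp_sum]
    refine Finset.prod_congr rfl fun i _ => ?_
    rw [Real.rpow_def_of_pos (hpos i), ← Real.exp_neg, mul_comm]
  rw [norm_lerchTerm, hprod, ← Real.exp_add, Real.exp_le_exp]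
  refine hcompare.trans ?_
  simp only [sub_mul, Finset.sum_sub_distrib] at hparts
  rw [Finset.sum_sub_distrib, Finset.sum_const, Finset.card_univ, Fintype.card_fin,
    nsmul_eq_mul]
  linarith
end
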